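/- arXiv:1507.06392 — 3 statements merged into one kernel-verified Lean document; each statement's English description precedes it below -/
import Mathlib

section
/- Let M be a finite-dimensional right A-module such that dim_k M e_v ≤ 1 for every vertex v. Then the image of every A-module endomorphism f of M is a direct summand of M. In particular, if M is indecomposable, then every A-module endomorphism of M is either zero or an automorphism, and End_A M ≅ k. -/
/-!
STATEMENT 0.
Work over an algebraically closed field `k` of characteristic zero. `A` is a basic
finite-dimensional `k`-algebra with a complete set `{e v}` of pairwise orthogonal primitive
idempotents. A right `A`-module is formalized as a module over `Aᵐᵒᵖ`. For a
finite-dimensional right `A`-module `M` with `dim_k (M • e v) ≤ 1` for every vertex `v`,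
the image of every `A`-module endomorphism of `M` is a direct summand; in particular if `M`
is indecomposable every endomorphism is zero or an automorphism and `End_A M ≅ k`.
-/

open MulOpposite

/-- The `k`-linear endomorphism of a right `A`-module `M` given by right multiplication
by `a : A`. -/
noncomputable def rightMulLin (k : Type) [Field k] (A : Type) [Ring A] [Algebra k A]
    (M : Type) [AddCommGroup M] [Module k M] [Module Aᵐᵒᵖ M] [SMulCommClass Aᵐᵒᵖ k M]
    (a : A) : M →ₗ[k] M where
  toFun m := op a • m
  map_add' _ _ := smul_add _ _ _
  map_smul' _ _ := smul_comm _ _ _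

/-- `dim_k (M e)`, the `k`-dimension of the image of right multiplication by `e` on `M`. -/
noncomputable def dimAt (k : Type) [Field k] (A : Type) [Ring A] [Algebra k A]
    (M : Type) [AddCommGroup M] [Module k M] [Module Aᵐᵒᵖ M] [SMulCommClass Aᵐᵒᵖ k M]
    (a : A) : ℕ :=
  Module.finrank k (LinearMap.range (rightMulLin k A M a))

/-- An idempotent is primitive if it is nonzero and is not the sum of two nonzero
orthogonal idempotents. -/
def IsPrimitiveIdempotent (A : Type) [Ring A] (e : A) : Prop :=
  IsIdempotentElem e ∧ e ≠ 0 ∧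
    ∀ a b : A, IsIdempotentElem a → IsIdempotentElem b → a * b = 0 → b * a = 0 →
      a + b = e → a = 0 ∨ b = 0

/-- A module is indecomposable if it is nonzero and admits no nontrivial direct sum
decomposition. -/
def IsIndecomposableModule (A : Type) [Ring A] (M : Type) [AddCommGroup M]
    [Module Aᵐᵒᵖ M] : Prop :=
  (⊤ : Submodule Aᵐᵒᵖ M) ≠ ⊥ ∧
    ∀ N N' : Submodule Aᵐᵒᵖ M, IsCompl N N' → N = ⊥ ∨ N' = ⊥

theorem image_of_endomorphism_is_summand_of_thin_dimension_vector
    (k : Type) [Field k] [IsAlgClosed k] [CharZero k]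
    (A : Type) [Ring A] [Algebra k A] [FiniteDimensional k A]
    (Q₀ : Type) [Fintype Q₀] (e : Q₀ → A)
    (he : CompleteOrthogonalIdempotents e)
    (hprim : ∀ v, IsPrimitiveIdempotent A (e v))
    -- `A` is basic: the indecomposable projectives `e v • A` are pairwise non-isomorphic
    (hbasic : ∀ v w : Q₀, v ≠ w →
      IsEmpty (↥(Submodule.span Aᵐᵒᵖ {e v}) ≃ₗ[Aᵐᵒᵖ] ↥(Submodule.span Aᵐᵒᵖ {e w})))
    (M : Type) [AddCommGroup M] [Module k M] [Module Aᵐᵒᵖ M]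
    [SMulCommClass Aᵐᵒᵖ k M] [IsScalarTower k Aᵐᵒᵖ M]
    [FiniteDimensional k M]
    (hthin : ∀ v, dimAt k A M (e v) ≤ 1) :
    (∀ f : M →ₗ[Aᵐᵒᵖ] M, ∃ N : Submodule Aᵐᵒᵖ M, IsCompl (LinearMap.range f) N) ∧
    (IsIndecomposableModule A M →
      (∀ f : M →ₗ[Aᵐᵒᵖ] M, f = 0 ∨ Function.Bijective f) ∧
      Nonempty ((M →ₗ[Aᵐᵒᵖ] M) ≃ₐ[k] k)) := by
  classical
  -- `f` acts by a scalar on each `M e_v`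
  have hsc : ∀ (f : M →ₗ[Aᵐᵒᵖ] M) (v : Q₀), ∃ c : k, ∀ m : M,
      f (op (e v) • m) = c • (op (e v) • m) := by
    intro f v
    obtain ⟨⟨x, hx⟩, hspan⟩ := finrank_le_one_iff.mp (hthin v)
    have key : ∀ m : M, ∃ c : k, c • x = op (e v) • m := by
      intro m
      obtain ⟨c, hc⟩ := hspan ⟨op (e v) • m, ⟨m, rfl⟩⟩
      exact ⟨c, congrArg Subtype.val hc⟩
    obtain ⟨y, hy⟩ := hx
    have hy' : op (e v) • y = x := hy
    have hfx : f x = op (e v) • f y := by rw [← hy', map_smul]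
    obtain ⟨c, hc⟩ := key (f y)
    refine ⟨c, fun m => ?_⟩
    obtain ⟨d, hd⟩ := key m
    rw [← hd, f.map_smul_of_tower, hfx, ← hc, smul_comm]
  have hsum : ∀ m : M, ∑ v, op (e v) • m = m := by
    intro m
    rw [← Finset.sum_smul, ← Finset.op_sum, he.complete, op_one, one_smul]
  have hcompl : ∀ f : M →ₗ[Aᵐᵒᵖ] M, IsCompl (LinearMap.range f) (LinearMap.ker f) := by
    intro f
    choose c hc using hsc f
    constructor
    · rw [Submodule.disjoint_def]
      rintro _ ⟨y, rfl⟩ hy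
      rw [LinearMap.mem_ker] at hy
      rw [← hsum (f y)]
      refine Finset.sum_eq_zero fun v _ => ?_
      have h1 : f (f (op (e v) • y)) = 0 := by rw [map_smul, map_smul, hy, smul_zero]
      rw [hc, f.map_smul_of_tower, hc] at h1
      rw [← map_smul, hc]
      rcases smul_eq_zero.mp h1 with h | h
      · rw [h, zero_smul]
      · exact h
    · rw [codisjoint_iff, eq_top_iff]
      intro m _
      rw [← hsum m]
      refine Submodule.sum_mem _ fun v _ => ?_
      by_cases h : c v = 0
      · refine Submodule.mem_sup_right ?_
        rw [LinearMap.mem_ker, hc, h, zero_smul]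
      · refine Submodule.mem_sup_left ⟨(c v)⁻¹ • (op (e v) • m), ?_⟩
        rw [f.map_smul_of_tower, hc, inv_smul_smul₀ h]
  refine ⟨fun f => ⟨_, hcompl f⟩, fun hind => ?_⟩
  have hzb : ∀ f : M →ₗ[Aᵐᵒᵖ] M, f = 0 ∨ Function.Bijective f := by
    intro f
    rcases hind.2 _ _ (hcompl f) with h | h
    · exact Or.inl (LinearMap.range_eq_bot.mp h)
    · refine Or.inr ⟨LinearMap.ker_eq_bot.mp h, LinearMap.range_eq_top.mp ?_⟩
      have := (hcompl f).sup_eq_top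
      rwa [h, sup_bot_eq] at this
  refine ⟨hzb, ?_⟩
  obtain ⟨m, -, hm⟩ := Submodule.exists_mem_ne_zero_of_ne_bot hind.1
  obtain ⟨v, hv⟩ : ∃ v, op (e v) • m ≠ 0 := by
    by_contra! h
    exact hm (by rw [← hsum m]; exact Finset.sum_eq_zero fun v _ => h v)
  have : Nontrivial M := ⟨m, 0, hm⟩
  refine ⟨(AlgEquiv.ofBijective (Algebra.ofId k (Module.End Aᵐᵒᵖ M))
    ⟨(Algebra.ofId k (Module.End Aᵐᵒᵖ M)).toRingHom.injective, fun f => ?_⟩).symm⟩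
  obtain ⟨c, hc⟩ := hsc f v
  refine ⟨c, ?_⟩
  rcases hzb (f - Algebra.ofId k (Module.End Aᵐᵒᵖ M) c) with h | h
  · exact (sub_eq_zero.mp h).symm
  · refine absurd (h.1 (a₁ := op (e v) • m) (a₂ := 0) ?_) hv
    rw [map_zero, LinearMap.sub_apply, hc, Algebra.ofId_apply, Module.algebraMap_end_apply, sub_self]
end

section
/- Any finite-dimensional right A-module M with dimension vector 𝟏 (that is, dim_k M e_v = 1 for every vertex v) has endomorphism algebra End_A M ≅ k^n as k-algebras, where n is the number of indecomposable direct summands in a decomposition of M into indecomposables; in particular, the indecomposable summands are pairwise non-isomorphic and each has endomorphism ring k. -/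
/-!
STATEMENT 1 (Proposition 4.2 of the paper).
Any finite-dimensional right `A`-module `M` with dimension vector `𝟏` (i.e.
`dim_k (M • e v) = 1` for every vertex `v`) has endomorphism algebra `End_A M ≅ kⁿ`,
where `n` is the number of indecomposable summands in a decomposition of `M` into
indecomposables; the summands are pairwise non-isomorphic and each has endomorphism
ring `k`.
-/

open MulOpposite

section Helpers

variable {k : Type} [Field k] {A : Type} [Ring A] [Algebra k A]
  {Q₀ : Type} [Fintype Q₀] {e : Q₀ → A}
  {M : Type} [AddCommGroup M] [Module k M] [Module Aᵐᵒᵖ M]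
  [SMulCommClass Aᵐᵒᵖ k M]

/-- Every endomorphism acts on `M e_v` by a scalar. -/
theorem exists_scalar_at (hone : ∀ v, dimAt k A M (e v) = 1)
    (f : M →ₗ[Aᵐᵒᵖ] M) (hfk : ∀ (c : k) (x : M), f (c • x) = c • f x)
    (he : CompleteOrthogonalIdempotents e) (v : Q₀) :
    ∃ c : k, ∀ x : M, f (op (e v) • x) = c • (op (e v) • x) := by
  have h := hone v
  unfold dimAt at h
  obtain ⟨⟨w, y, hy⟩, hw0, hw⟩ := finrank_eq_one_iff'.1 h
  have hwe : op (e v) • w = w := by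
    rw [← hy]
    change op (e v) • op (e v) • y = op (e v) • y
    rw [smul_smul, ← op_mul, (he.idem v).eq]
  obtain ⟨c, hc⟩ := hw ⟨f w, ⟨f w, by
    change op (e v) • f w = f w
    rw [← map_smul, hwe]⟩⟩
  have hc' : c • w = f w := congrArg Subtype.val hc
  refine ⟨c, fun x => ?_⟩
  obtain ⟨d, hd⟩ := hw ⟨op (e v) • x, ⟨x, rfl⟩⟩
  have hd' : d • w = op (e v) • x := congrArg Subtype.val hd
  rw [← hd', hfk, ← hc', smul_comm]

theorem sum_op_smul (he : CompleteOrthogonalIdempotents e) (x : M) :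
    ∑ v, op (e v) • x = x := by
  rw [← Finset.sum_smul, ← Finset.op_sum, he.complete, op_one, one_smul]

theorem end_klin [IsScalarTower k Aᵐᵒᵖ M] {M' : Type} [AddCommGroup M'] [Module k M']
    [Module Aᵐᵒᵖ M'] [IsScalarTower k Aᵐᵒᵖ M']
    (f : M →ₗ[Aᵐᵒᵖ] M') (c : k) (x : M) : f (c • x) = c • f x := by
  rw [← one_smul Aᵐᵒᵖ x, ← smul_assoc, map_smul, map_smul, smul_assoc]

theorem end_comm [IsScalarTower k Aᵐᵒᵖ M] (hone : ∀ v, dimAt k A M (e v) = 1)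
    (he : CompleteOrthogonalIdempotents e)
    (f g : M →ₗ[Aᵐᵒᵖ] M) (x : M) : f (g x) = g (f x) := by
  rw [← sum_op_smul he x]
  simp only [map_sum]
  refine Finset.sum_congr rfl fun v _ => ?_
  obtain ⟨c, hc⟩ := exists_scalar_at hone f (end_klin f) he v
  obtain ⟨d, hd⟩ := exists_scalar_at hone g (end_klin g) he v
  rw [hd, hc, end_klin f, end_klin g, hc, hd, smul_comm]

theorem end_reduced [IsScalarTower k Aᵐᵒᵖ M] (hone : ∀ v, dimAt k A M (e v) = 1)
    (he : CompleteOrthogonalIdempotents e)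
    (g : M →ₗ[Aᵐᵒᵖ] M) (x : M) (h : g (g x) = 0) : g x = 0 := by
  rw [← sum_op_smul he x, map_sum]
  refine Finset.sum_eq_zero fun v _ => ?_
  obtain ⟨c, hc⟩ := exists_scalar_at hone g (end_klin g) he v
  have h2 : c • c • (op (e v) • x) = 0 := by
    rw [← hc, ← end_klin g, ← hc, map_smul, map_smul, h, smul_zero]
  rw [hc]
  rcases smul_eq_zero.1 h2 with h3 | h3
  · rw [h3, zero_smul]
  · exact h3

/-- An endomorphism of an indecomposable summand is a scalar. -/
theorem scalar_of_indec [IsAlgClosed k] [IsScalarTower k Aᵐᵒᵖ M]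
    [FiniteDimensional k M]
    (hone : ∀ v, dimAt k A M (e v) = 1)
    (he : CompleteOrthogonalIdempotents e)
    (N : Submodule Aᵐᵒᵖ M) (p : M →ₗ[Aᵐᵒᵖ] N) (hp : ∀ x : N, p x = x)
    (hN : IsIndecomposableModule A N) (f : N →ₗ[Aᵐᵒᵖ] N) :
    ∃ c : k, ∀ x, f x = c • x := by
  have : Nontrivial N := by
    by_contra hn
    rw [not_nontrivial_iff_subsingleton] at hn
    exact hN.1 (Subsingleton.elim _ _)
  have : FiniteDimensional k N :=
    inferInstanceAs (FiniteDimensional k (N.restrictScalars k))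
  let fk : Module.End k N := { toFun := f, map_add' := map_add f, map_smul' := end_klin f }
  obtain ⟨c, hc⟩ := Module.End.exists_eigenvalue fk
  obtain ⟨x, hx⟩ := hc.exists_hasEigenvector
  let g : N →ₗ[Aᵐᵒᵖ] N := f - c • LinearMap.id
  have hg : ∀ y, g y = f y - c • y := fun y => rfl
  have hred : ∀ y, g (g y) = 0 → g y = 0 := by
    intro y hy
    have := end_reduced hone he (N.subtype ∘ₗ g ∘ₗ p) (y : M) (by simp [hp, hy])
    simpa [hp] using this
  let gk : Module.End k N := { toFun := g, map_add' := map_add g, map_smul' := end_klin g }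
  have hdis : Disjoint (LinearMap.ker gk) (LinearMap.range gk) := by
    rw [Submodule.disjoint_def]
    rintro _ h1 ⟨y, rfl⟩
    exact hred y h1
  have hck : IsCompl (LinearMap.ker gk) (LinearMap.range gk) := by
    refine ⟨hdis, ?_⟩
    rw [codisjoint_iff]
    apply Submodule.eq_top_of_disjoint _ _ _ hdis
    rw [add_comm, LinearMap.finrank_range_add_finrank_ker]
  have hcA : IsCompl (LinearMap.ker g) (LinearMap.range g) := by
    constructor
    · rw [Submodule.disjoint_def]
      rintro _ h1 ⟨y, rfl⟩
      exact hred y h1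
    · rw [codisjoint_iff, Submodule.eq_top_iff']
      intro y
      have : y ∈ LinearMap.ker gk ⊔ LinearMap.range gk := by rw [hck.sup_eq_top]; trivial
      obtain ⟨a, ha, b, ⟨z, rfl⟩, rfl⟩ := Submodule.mem_sup.1 this
      exact Submodule.add_mem_sup ha ⟨z, rfl⟩
  refine ⟨c, fun y => ?_⟩
  rcases hN.2 _ _ hcA with h | h
  · exfalso
    apply hx.2
    have : x ∈ LinearMap.ker g := by
      rw [LinearMap.mem_ker, hg, sub_eq_zero]
      exact hx.apply_eq_smul
    rw [h] at this
    simpa using this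
  · have : g y ∈ LinearMap.range g := ⟨y, rfl⟩
    rw [h, Submodule.mem_bot, hg, sub_eq_zero] at this
    exact this

end Helpers

theorem endomorphism_algebra_of_dimension_vector_one
    (k : Type) [Field k] [IsAlgClosed k] [CharZero k]
    (A : Type) [Ring A] [Algebra k A] [FiniteDimensional k A]
    (Q₀ : Type) [Fintype Q₀] (e : Q₀ → A)
    (he : CompleteOrthogonalIdempotents e)
    (hprim : ∀ v, IsPrimitiveIdempotent A (e v))
    (hbasic : ∀ v w : Q₀, v ≠ w →
      IsEmpty (↥(Submodule.span Aᵐᵒᵖ {e v}) ≃ₗ[Aᵐᵒᵖ] ↥(Submodule.span Aᵐᵒᵖ {e w})))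
    (M : Type) [AddCommGroup M] [Module k M] [Module Aᵐᵒᵖ M]
    [SMulCommClass Aᵐᵒᵖ k M] [IsScalarTower k Aᵐᵒᵖ M]
    [FiniteDimensional k M]
    (hone : ∀ v, dimAt k A M (e v) = 1)
    -- a decomposition of `M` into indecomposable submodules
    (n : ℕ) (N : Fin n → Submodule Aᵐᵒᵖ M)
    (hinternal : DirectSum.IsInternal N)
    (hindec : ∀ i, IsIndecomposableModule A ↥(N i)) :
    Nonempty ((M →ₗ[Aᵐᵒᵖ] M) ≃ₐ[k] (Fin n → k)) ∧
    (∀ i j : Fin n, i ≠ j → IsEmpty (↥(N i) ≃ₗ[Aᵐᵒᵖ] ↥(N j))) ∧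
    (∀ i, Nonempty ((↥(N i) →ₗ[Aᵐᵒᵖ] ↥(N i)) ≃ₐ[k] k)) := by
  classical
  have hnt : ∀ i, ∃ x : N i, x ≠ 0 := by
    intro i
    by_contra hn
    push Not at hn
    exact (hindec i).1 (by
      rw [eq_bot_iff]
      intro x _
      rw [hn x]
      exact Submodule.zero_mem _)
  let E : (DirectSum (Fin n) fun i => N i) ≃ₗ[Aᵐᵒᵖ] M :=
    LinearEquiv.ofBijective (DirectSum.coeLinearMap N) hinternal
  have hE : ∀ i (x : N i), E.symm (x : M) = DirectSum.lof Aᵐᵒᵖ (Fin n) (fun i => N i) i x := by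
    intro i x
    rw [LinearEquiv.symm_apply_eq]
    exact (DirectSum.coeLinearMap_lof N i x).symm
  let p : ∀ i, M →ₗ[Aᵐᵒᵖ] N i := fun i =>
    DirectSum.component Aᵐᵒᵖ (Fin n) (fun i => N i) i ∘ₗ E.symm.toLinearMap
  have hp : ∀ i (x : N i), p i x = x := by
    intro i x
    change DirectSum.component Aᵐᵒᵖ (Fin n) (fun i => N i) i (E.symm x) = x
    rw [hE, DirectSum.component.lof_self]
  have hp0 : ∀ i j (x : N j), i ≠ j → p i x = 0 := by
    intro i j x hij
    change DirectSum.component Aᵐᵒᵖ (Fin n) (fun i => N i) i (E.symm x) = 0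
    rw [hE, DirectSum.component.of, dif_neg (Ne.symm hij)]
  have hext : ∀ f g : M →ₗ[Aᵐᵒᵖ] M, (∀ i (x : N i), f x = g x) → f = g := by
    intro f g h
    have h2 : f ∘ₗ E.toLinearMap = g ∘ₗ E.toLinearMap := by
      apply DirectSum.linearMap_ext
      intro i
      ext x
      have : E (DirectSum.lof Aᵐᵒᵖ (Fin n) (fun i => N i) i x) = (x : M) :=
        DirectSum.coeLinearMap_lof N i x
      simp only [LinearMap.comp_apply, LinearEquiv.coe_coe, this, h]
    ext y
    have := LinearMap.congr_fun h2 (E.symm y)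
    simpa using this
  have hstab : ∀ (f : M →ₗ[Aᵐᵒᵖ] M) i (x : N i), ((p i (f x) : N i) : M) = f x := by
    intro f i x
    have := end_comm hone he f ((N i).subtype ∘ₗ p i) (x : M)
    simpa [hp] using this.symm
  have hsc : ∀ i (f : N i →ₗ[Aᵐᵒᵖ] N i), ∃ c : k, ∀ x, f x = c • x := fun i f =>
    scalar_of_indec hone he (N i) (p i) (hp i) (hindec i) f
  refine ⟨?_, ?_, ?_⟩
  · let φ₀ : (Fin n → k) → (M →ₗ[Aᵐᵒᵖ] M) := fun c => ∑ i, c i • ((N i).subtype ∘ₗ p i)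
    have hφ : ∀ c i (x : N i), φ₀ c x = c i • (x : M) := by
      intro c i x
      simp only [φ₀, LinearMap.sum_apply, LinearMap.smul_apply, LinearMap.comp_apply]
      rw [Finset.sum_eq_single i]
      · rw [hp]; rfl
      · intro j _ hj
        rw [hp0 j i x hj, map_zero, smul_zero]
      · simp
    let φ : (Fin n → k) →ₐ[k] Module.End Aᵐᵒᵖ M :=
      { toFun := φ₀
        map_one' := hext _ _ fun i x => by rw [hφ]; simp
        map_mul' := fun c d => hext _ _ fun i x => by
          change _ = φ₀ c (φ₀ d x)
          rw [hφ, hφ, end_klin (φ₀ c), hφ, Pi.mul_apply, mul_comm, mul_smul]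
        map_zero' := hext _ _ fun i x => by rw [hφ]; simp
        map_add' := fun c d => hext _ _ fun i x => by
          change _ = φ₀ c x + φ₀ d x
          rw [hφ, hφ, hφ, Pi.add_apply, add_smul]
        commutes' := fun r => hext _ _ fun i x => by
          rw [hφ]; rfl }
    refine ⟨(AlgEquiv.ofBijective φ ⟨?_, ?_⟩).symm⟩
    · intro c d h
      funext i
      obtain ⟨x, hx⟩ := hnt i
      have h1 : φ₀ c x = φ₀ d x := LinearMap.congr_fun h (x : M)
      rw [hφ, hφ] at h1
      exact smul_left_injective k (m := (x : M)) (by simpa using hx) h1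
    · intro f
      choose c hc using fun i => hsc i (p i ∘ₗ f ∘ₗ (N i).subtype)
      refine ⟨c, hext _ _ fun i x => ?_⟩
      change φ₀ c x = f x
      rw [hφ, ← hstab f i x]
      exact (congrArg Subtype.val (hc i x)).symm
  · intro i j hij
    refine ⟨fun s => ?_⟩
    obtain ⟨x, hx⟩ := hnt i
    have h := hstab ((N j).subtype ∘ₗ s.toLinearMap ∘ₗ p i) i x
    simp only [LinearMap.comp_apply, hp, Submodule.subtype_apply, LinearEquiv.coe_coe,
      hp0 i j _ hij] at h
    apply hx
    apply s.injective
    rw [map_zero]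
    exact Subtype.ext h.symm
  · intro i
    refine ⟨(AlgEquiv.ofBijective (Algebra.ofId k (Module.End Aᵐᵒᵖ (N i))) ⟨?_, ?_⟩).symm⟩
    · intro c d h
      obtain ⟨x, hx⟩ := hnt i
      have h1 : c • x = d • x := LinearMap.congr_fun h x
      exact smul_left_injective k hx h1
    · intro f
      obtain ⟨c, hc⟩ := hsc i f
      exact ⟨c, LinearMap.ext fun x => (hc x).symm⟩
end

section
/- Let R be a regular local ring of Krull dimension d ≥ 1, and let 0 → F_d → F_{d−1} → ⋯ → F_1 → F_0 → 0 be a complex of finitely generated free R-modules (concentrated in homological degrees 0 through d) such that every homology module H_j of the complex has finite length over R. Then H_j = 0 for all j ≥ 1, i.e. the complex is exact except possibly at the degree-0 spot. -/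
/-!
STATEMENT 15 (the commutative-algebra core of Lemma 10.3 of the paper).
Let `R` be a regular local ring of Krull dimension `d ≥ 1` (regularity is expressed by
the maximal ideal being generated by `d` elements), and let
`0 → F_d → ⋯ → F_1 → F_0 → 0` be a complex of finitely generated free `R`-modules whose
homology modules all have finite length.  Then the homology vanishes in all degrees
`j ≥ 1`.
-/

namespace FreeComplexAux

open CategoryTheory IsLocalRing RingTheory.Sequence Abelian Limits

lemma reg_seq (d : ℕ) : ∀ (R : Type) [CommRing R] [IsNoetherianRing R] [IsLocalRing R]
    (hdim : ringKrullDim R = d)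
    (s : Fin d → R) (hs : Ideal.span (Set.range s) = maximalIdeal R),
    IsDomain R ∧ ∃ rs : List R, rs.length = d ∧ (∀ r ∈ rs, r ∈ maximalIdeal R) ∧
      IsWeaklyRegular R rs := by
  induction d with
  | zero =>
    intro R _ _ _ hdim s hs
    have hf : IsField R := by
      rw [IsLocalRing.isField_iff_maximalIdeal_eq, ← hs]; simp
    exact ⟨hf.isDomain, [], rfl, by simp, IsWeaklyRegular.nil R R⟩
  | succ d ih =>
    intro R _ _ _ hdim s hs
    have hmem : ∀ i, s i ∈ maximalIdeal R := fun i => by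
      rw [← hs]; exact Ideal.subset_span ⟨i, rfl⟩
    -- the maximal ideal is not a minimal prime
    have hmin : maximalIdeal R ∉ minimalPrimes R := by
      intro h
      have h0 : (maximalIdeal R).height = 0 := Ideal.height_eq_zero_iff.mpr h
      have := IsLocalRing.maximalIdeal_height_eq_ringKrullDim (R := R)
      rw [h0, hdim] at this
      norm_cast at this
    have hsq : ¬ maximalIdeal R ≤ maximalIdeal R ^ 2 := by
      intro h
      have h0 : maximalIdeal R = ⊥ := by
        apply Submodule.eq_bot_of_le_smul_of_le_jacobson_bot (maximalIdeal R) _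
          (IsNoetherian.noetherian _)
        · rwa [smul_eq_mul, ← pow_two]
        · exact maximalIdeal_le_jacobson _
      have hf : IsField R := by
        rwa [IsLocalRing.isField_iff_maximalIdeal_eq]
      have := ringKrullDim_eq_zero_of_isField hf
      rw [hdim] at this
      norm_cast at this
    obtain ⟨x, hxm, hx2, hxmin⟩ : ∃ x ∈ maximalIdeal R, x ∉ maximalIdeal R ^ 2 ∧
        ∀ p ∈ minimalPrimes R, x ∉ p := by
      by_contra! hcon
      have hfin : (minimalPrimes R ∪ {maximalIdeal R ^ 2}).Finite :=
        (minimalPrimes.finite_of_isNoetherianRing R).union (Set.finite_singleton _)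
      have := (Ideal.subset_union_prime_finite (s := minimalPrimes R ∪ {maximalIdeal R ^ 2}) hfin
        (f := id) (maximalIdeal R ^ 2) (maximalIdeal R ^ 2)
        (fun p hp h1 _ => by
          rcases hp with hp | hp
          · exact hp.1.1
          · exact absurd hp h1) (I := maximalIdeal R)).1 (by
          intro x hx
          simp only [Set.mem_iUnion, id]
          by_cases h2 : x ∈ maximalIdeal R ^ 2
          · exact ⟨_, Or.inr rfl, h2⟩
          · obtain ⟨p, hp, hxp⟩ := hcon x hx h2
            exact ⟨p, Or.inl hp, hxp⟩)
      obtain ⟨p, hp | hp, hle⟩ := this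
      · have := hp.1.1
        have : maximalIdeal R = p := (IsLocalRing.maximalIdeal.isMaximal R).eq_of_le this.ne_top hle
        exact hmin (this ▸ hp)
      · rw [Set.mem_singleton_iff] at hp
        subst hp
        exact hsq hle
    -- `x` replaces one of the generators
    obtain ⟨c, hc⟩ : ∃ c : Fin (d+1) → R, ∑ i, c i * s i = x := by
      rw [← hs] at hxm
      simpa using (Submodule.mem_span_range_iff_exists_fun R).mp hxm
    obtain ⟨i, hi⟩ : ∃ i, IsUnit (c i) := by
      by_contra! hcon
      apply hx2
      rw [← hc, pow_two]
      exact Ideal.sum_mem _ fun i _ => Ideal.mul_mem_mul ((mem_maximalIdeal _).mpr (hcon i)) (hmem i)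
    have hxtop : Ideal.span {x} ≠ ⊤ := by
      intro h
      rw [Ideal.span_singleton_eq_top] at h
      exact hxm h
    have : Nontrivial (R ⧸ Ideal.span {x}) := Ideal.Quotient.nontrivial_iff.mpr hxtop
    let π := Ideal.Quotient.mk (Ideal.span {x})
    have hπ : Function.Surjective π := Ideal.Quotient.mk_surjective
    have : IsLocalRing (R ⧸ Ideal.span {x}) := IsLocalRing.of_surjective' π hπ
    have hmap : (maximalIdeal R).map π = maximalIdeal (R ⧸ Ideal.span {x}) :=
      IsLocalRing.map_maximalIdeal_of_surjective π hπ
    let t : Fin d → R ⧸ Ideal.span {x} := fun j => π (s (i.succAbove j))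
    have ht : Ideal.span (Set.range t) = maximalIdeal (R ⧸ Ideal.span {x}) := by
      rw [← hmap, ← hs, Ideal.map_span]
      apply le_antisymm
      · apply Ideal.span_mono
        rintro _ ⟨j, rfl⟩
        exact ⟨_, ⟨_, rfl⟩, rfl⟩
      · rw [Ideal.span_le]
        rintro _ ⟨_, ⟨j, rfl⟩, rfl⟩
        rcases Fin.eq_self_or_eq_succAbove i j with rfl | ⟨j, rfl⟩
        · have h0 : ∑ k, π (c k) * π (s k) = 0 := by
            have : π x = 0 := Ideal.Quotient.eq_zero_iff_mem.mpr (Ideal.mem_span_singleton_self x)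
            have h2 := congrArg π hc
            rw [this] at h2
            simpa using h2
          rw [Fin.sum_univ_succAbove _ j] at h0
          have hu : IsUnit (π (c j)) := hi.map π
          have : π (c j) * π (s j) ∈ Ideal.span (Set.range t) := by
            rw [eq_neg_of_add_eq_zero_left h0]
            exact neg_mem (Ideal.sum_mem _ fun k _ => Ideal.mul_mem_left _ _ (Ideal.subset_span ⟨k, rfl⟩))
          exact (Ideal.unit_mul_mem_iff_mem _ hu).mp this
        · exact Ideal.subset_span ⟨j, rfl⟩
    have hd' : ringKrullDim (R ⧸ Ideal.span {x}) = d := by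
      have hle : ringKrullDim (R ⧸ Ideal.span {x}) ≤ d := by
        refine (ringKrullDim_le_spanFinrank_maximalIdeal _).trans ?_
        rw [← ht]
        norm_cast
        refine (Submodule.spanFinrank_span_le_ncard_of_finite (Set.finite_range t)).trans ?_
        rw [← Set.image_univ]
        refine (Set.ncard_image_le Set.finite_univ).trans ?_
        simp [Set.ncard_univ]
      refine le_antisymm hle ?_
      have h1 := ringKrullDim_le_ringKrullDim_quotient_add_card ({x} : Finset R) (by
        rw [ringJacobson_eq_maximalIdeal]; simpa using hxm)
      rw [hdim, Finset.coe_singleton, Finset.card_singleton] at h1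
      generalize ringKrullDim (R ⧸ Ideal.span {x}) = D at h1 hle
      push_cast at h1
      induction D using WithBot.recBotCoe with
      | bot => exact absurd h1 (by rw [WithBot.bot_add, le_bot_iff]; exact WithBot.coe_ne_bot (a := (d : ℕ∞) + 1))
      | coe D =>
        have h2 : (d : ℕ∞) + 1 ≤ D + 1 := by exact_mod_cast h1
        have h3 : (d : ℕ∞) ≤ D := (ENat.add_le_add_iff_right (by simp)).mp h2
        exact_mod_cast h3
    obtain ⟨hdom, rs, hl, hrm, hreg⟩ := ih (R ⧸ Ideal.span {x}) hd' t ht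
    have hxp : (Ideal.span {x}).IsPrime := (Ideal.Quotient.isDomain_iff_prime _).mp hdom
    obtain ⟨p, hp, hpx⟩ := Ideal.exists_minimalPrimes_le (I := (⊥ : Ideal R)) (J := Ideal.span {x}) bot_le
    have hpp : p.IsPrime := hp.1.1
    have hp0 : p = ⊥ := by
      apply Submodule.eq_bot_of_le_smul_of_le_jacobson_bot (Ideal.span {x}) p
          (IsNoetherian.noetherian _)
      · intro y hy
        obtain ⟨a, rfl⟩ := Ideal.mem_span_singleton'.mp (hpx hy)
        have ha : a ∈ p := (hpp.mem_or_mem hy).resolve_right (hxmin p hp)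
        rw [mul_comm]
        exact Ideal.mul_mem_mul (Ideal.mem_span_singleton_self x) ha
      · exact (le_maximalIdeal hxtop).trans (maximalIdeal_le_jacobson _)
    subst hp0
    have hR : IsDomain R := IsDomain.of_bot_isPrime R
    refine ⟨hR, ?_⟩
    obtain ⟨rs', rfl⟩ : ∃ rs', rs = List.map π rs' := by
      have := List.map_surjective_iff.mpr hπ
      obtain ⟨a, ha⟩ := this rs
      exact ⟨a, ha.symm⟩
    refine ⟨x :: rs', by simpa using hl, ?_, ?_⟩
    · intro r hr
      rcases List.mem_cons.mp hr with rfl | hr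
      · exact hxm
      · have := hrm (π r) (List.mem_map_of_mem hr)
        intro hu
        exact this (hu.map π)
    · rw [isWeaklyRegular_cons_iff]
      constructor
      · have : x ≠ 0 := fun h => hx2 (by rw [h]; exact zero_mem _)
        exact IsSMulRegular.of_ne_zero this
      · have h1 : IsWeaklyRegular (R ⧸ Ideal.span {x}) rs' :=
          (isWeaklyRegular_map_algebraMap_iff (R := R) (S := R ⧸ Ideal.span {x})
            (M := R ⧸ Ideal.span {x}) rs').mp hreg
        have e : (R ⧸ Ideal.span {x}) ≃ₗ[R] QuotSMulTop x R :=
          Submodule.quotEquivOfEq _ _ (by simp [← Submodule.ideal_span_singleton_smul])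
        exact (e.isWeaklyRegular_congr rs').mp h1

lemma support_of_fl {R : Type} [CommRing R] [IsLocalRing R] {M : Type} [AddCommGroup M] [Module R M]
    (h : IsFiniteLength R M) :
    Module.support R M ⊆ PrimeSpectrum.zeroLocus (maximalIdeal R : Set R) := by
  induction h with
  | of_subsingleton => simp [Module.support_eq_empty]
  | @of_simple_quotient M _ _ N _ _ ih =>
    rw [Module.support_of_exact (LinearMap.exact_subtype_mkQ N) N.injective_subtype N.mkQ_surjective]
    refine Set.union_subset ih ?_
    rw [Module.support_eq_zeroLocus]
    apply PrimeSpectrum.zeroLocus_anti_mono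
    have := IsSimpleModule.annihilator_isMaximal (R := R) (M := M ⧸ N)
    rw [IsLocalRing.eq_maximalIdeal this]

lemma acyc {R : Type} [CommRing R] (N : ModuleCat.{0} R)
    (S : ShortComplex (ModuleCat.{0} R)) (hS : S.ShortExact) (i : ℕ)
    (h2 : Subsingleton (Ext N S.X₂ i)) (h1 : Subsingleton (Ext N S.X₁ (i+1))) :
    Subsingleton (Ext N S.X₃ i) := by
  have zero1 := AddCommGrpCat.isZero_of_iff_subsingleton.mpr h2
  have zero2 := AddCommGrpCat.isZero_of_iff_subsingleton.mpr h1
  exact AddCommGrpCat.subsingleton_of_isZero <| ShortComplex.Exact.isZero_of_both_zeros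
        ((Ext.covariant_sequence_exact₃' N hS) i (i + 1) rfl)
        (zero1.eq_zero_of_src _) (zero2.eq_zero_of_tgt _)

lemma acyc2 {R : Type} [CommRing R] (N : ModuleCat.{0} R)
    (S : ShortComplex (ModuleCat.{0} R)) (hS : S.ShortExact) (i : ℕ)
    (h1 : Subsingleton (Ext N S.X₁ i)) (h3 : Subsingleton (Ext N S.X₃ i)) :
    Subsingleton (Ext N S.X₂ i) := by
  have zero1 := AddCommGrpCat.isZero_of_iff_subsingleton.mpr h1
  have zero2 := AddCommGrpCat.isZero_of_iff_subsingleton.mpr h3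
  exact AddCommGrpCat.subsingleton_of_isZero <| ShortComplex.Exact.isZero_of_both_zeros
        ((Ext.covariant_sequence_exact₂' N hS) i)
        (zero1.eq_zero_of_src _) (zero2.eq_zero_of_tgt _)

lemma ext_zero {R : Type} [CommRing R] (N : ModuleCat.{0} R) {M : ModuleCat.{0} R}
    (h : IsZero M) (i : ℕ) : Subsingleton (Ext N M i) := by
  have key : ∀ a : Ext N M i, a = 0 := fun a => by
    rw [← Ext.comp_mk₀_id a, (IsZero.iff_id_eq_zero _).mp h, Ext.mk₀_zero, Ext.comp_zero]
  exact ⟨fun a b => (key a).trans (key b).symm⟩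

lemma ext_free {R : Type} [CommRing R] [IsNoetherianRing R] [IsLocalRing R]
    (rs : List R) (mem : ∀ r ∈ rs, r ∈ maximalIdeal R) (reg : IsRegular R rs)
    (N : ModuleCat.{0} R) [Module.Finite R N]
    (Nsupp : Module.support R N ⊆ PrimeSpectrum.zeroLocus (maximalIdeal R : Set R))
    (M : ModuleCat.{0} R) [Module.Finite R M] [Module.Free R M] (i : ℕ) (hi : i < rs.length) :
    Subsingleton (Ext N M i) := by
  rcases subsingleton_or_nontrivial M with h | h
  · have : IsZero M := ModuleCat.isZero_of_subsingleton M
    exact ext_zero N this i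
  · have hw : IsWeaklyRegular M rs :=
      (LinearEquiv.isWeaklyRegular_congr (TensorProduct.rid R M) rs).mp
        reg.toIsWeaklyRegular.isWeaklyRegular_lTensor
    have hr := IsRegular.of_isWeaklyRegular_of_mem_maximalIdeal _ mem hw
    refine ModuleCat.subsingleton_ext_of_exists_isRegular (maximalIdeal R) N Nsupp M ?_ rs mem hr i hi
    have := Submodule.top_ne_ideal_smul_of_le_jacobson_annihilator
      (maximalIdeal_le_jacobson (R := R) (Module.annihilator R M)) 
    exact lt_top_iff_ne_top.mpr (Ne.symm this)

lemma ses1 {R : Type} [CommRing R] (F : ChainComplex (ModuleCat.{0} R) ℕ) (k : ℕ) :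
    (ShortComplex.mk (kernel.ι (F.homologyπ k)) (F.homologyπ k) (kernel.condition _)).ShortExact :=
  { exact := ShortComplex.exact_kernel _
    mono_f := inferInstance
    epi_g := inferInstance }

lemma ses2 {R : Type} [CommRing R] (F : ChainComplex (ModuleCat.{0} R) ℕ) (k : ℕ) :
    ∃ w, (ShortComplex.mk (F.iCycles (k+1))
      (kernel.lift (F.homologyπ k) (F.toCycles (k+1) k) (by simp)) w).ShortExact := by
  have w0 : kernel.lift (F.homologyπ k) (F.toCycles (k+1) k) (by simp) ≫ (kernel.ι (F.homologyπ k) ≫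
    F.iCycles k) = F.d (k+1) k := by simp
  have w : F.iCycles (k+1) ≫ kernel.lift (F.homologyπ k) (F.toCycles (k+1) k) (by simp) = 0 := by
    rw [← cancel_mono (kernel.ι (F.homologyπ k) ≫ F.iCycles k), Category.assoc, w0]
    simp
  refine ⟨w, ?_⟩
  refine { exact := ?_, mono_f := by dsimp; infer_instance, epi_g := ?_ }
  · apply ShortComplex.exact_of_f_is_kernel
    have hk := F.cyclesIsKernel (k+1) k (by simp)
    refine KernelFork.IsLimit.ofι' _ _ ?_
    intro A g hg
    dsimp at g hg
    have : g ≫ F.d (k+1) k = 0 := by rw [← w0, ← Category.assoc, hg, zero_comp]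
    exact ⟨F.liftCycles g k (by simp) this, by simp⟩
  · have e : (ShortComplex.mk (F.toCycles (k+1) k) (F.homologyπ k) (by simp)).Exact := by
      apply ShortComplex.exact_of_g_is_cokernel
      exact F.homologyIsCokernel (k+1) k (by simp)
    exact (ShortComplex.exact_iff_epi_kernel_lift _).1 e

lemma main_of_reg {R : Type} [CommRing R] [IsNoetherianRing R] [IsLocalRing R]
    (d : ℕ) (hd : 1 ≤ d) (rs : List R) (hl : rs.length = d)
    (mem : ∀ r ∈ rs, r ∈ maximalIdeal R) (reg : IsRegular R rs)
    (F : ChainComplex (ModuleCat.{0} R) ℕ)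
    (hfree : ∀ j, Module.Free R (F.X j)) (hfg : ∀ j, Module.Finite R (F.X j))
    (hbounded : ∀ j, d < j → Subsingleton (F.X j))
    (hfl : ∀ j, IsFiniteLength R (F.homology j)) :
    ∀ j, 1 ≤ j → Subsingleton (F.homology j) := by
  have hz : ∀ j, d < j → IsZero (F.X j) := fun j hj =>
    have := hbounded j hj
    ModuleCat.isZero_of_subsingleton _
  have hzc : ∀ j, d < j → IsZero (F.cycles j) := fun j hj =>
    IsZero.of_mono (F.iCycles j) (hz j hj)
  have hzh : ∀ j, d < j → IsZero (F.homology j) := fun j hj =>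
    IsZero.of_epi (F.homologyπ j) (hzc j hj)
  -- descending induction on exactness
  have key : ∀ n j, 1 ≤ j → d < j + n → IsZero (F.homology j) ∧ 
      ∀ N : ModuleCat.{0} R, Module.Finite R N →
        Module.support R N ⊆ PrimeSpectrum.zeroLocus (maximalIdeal R : Set R) →
        ∀ i, i ≤ j → Subsingleton (Ext N (F.cycles j) i) := by
    intro n
    induction n with
    | zero =>
      intro j hj hdj
      exact ⟨hzh j hdj, fun N _ _ i _ => ext_zero N (hzc j hdj) i⟩
    | succ n ih =>
      intro j hj hdj
      by_cases hjd : d < j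
      · exact ⟨hzh j hjd, fun N _ _ i _ => ext_zero N (hzc j hjd) i⟩
      obtain ⟨-, ih2⟩ := ih (j+1) (by omega) (by omega)
      obtain ⟨w, hs2⟩ := ses2 F j
      have hB : ∀ N : ModuleCat.{0} R, Module.Finite R N →
        Module.support R N ⊆ PrimeSpectrum.zeroLocus (maximalIdeal R : Set R) →
        ∀ i, i ≤ j → Subsingleton (Ext N (kernel (F.homologyπ j)) i) := by
        intro N hN hs i hi
        rcases (not_lt.mp hjd).eq_or_lt with h | h
        · have := hs2.epi_g
          dsimp at this
          exact ext_zero N (IsZero.of_epi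
            (kernel.lift (F.homologyπ j) (F.toCycles (j+1) j) _) (hz (j+1) (by omega))) i
        have := hfree (j+1)
        have := hfg (j+1)
        exact acyc N _ hs2 i (ext_free rs mem reg N hs _ i (by omega))
          (ih2 N hN hs (i+1) (by omega))
      have hH : IsZero (F.homology j) := by
        have hN : Module.Finite R (F.homology j) := by
          have := (isFiniteLength_iff_isNoetherian_isArtinian.mp (hfl j)).1
          infer_instance
        have hs := support_of_fl (hfl j)
        have h0 : Subsingleton (Ext (F.homology j) (F.cycles j) 0) := by
          have := hfree j
          have := hfg j
          have h1 := ext_free rs mem reg (F.homology j) hs (F.X j) 0 (by omega)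
          have h2 : Subsingleton (F.homology j ⟶ F.X j) := Ext.homEquiv₀.symm.injective.subsingleton
          have h3 : Subsingleton (F.homology j ⟶ F.cycles j) :=
            ⟨fun a b => by rw [← cancel_mono (F.iCycles j)]; exact Subsingleton.elim _ _⟩
          exact Ext.homEquiv₀.injective.subsingleton
        have h4 := acyc (F.homology j) _ (ses1 F j) 0 h0 (hB _ hN hs 1 hj)
        have h5 : Subsingleton (F.homology j ⟶ F.homology j) :=
          Ext.homEquiv₀.symm.injective.subsingleton
        exact (IsZero.iff_id_eq_zero _).mpr (Subsingleton.elim _ _)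
      exact ⟨hH, fun N hN hs i hi => acyc2 N _ (ses1 F j) i (hB N hN hs i hi) (ext_zero N hH i)⟩
  intro j hj
  exact ModuleCat.subsingleton_of_isZero (key (d+1) j hj (by omega)).1

end FreeComplexAux

open CategoryTheory

theorem bounded_free_complex_with_finite_length_homology_is_exact_in_positive_degrees
    (R : Type) [CommRing R] [IsNoetherianRing R] [IsLocalRing R]
    (d : ℕ) (hd : 1 ≤ d)
    -- `R` has Krull dimension `d` …
    (hdim : ringKrullDim R = d)
    -- … and is regular: the maximal ideal is generated by `d` elements
    (hreg : ∃ s : Fin d → R, Ideal.span (Set.range s) = IsLocalRing.maximalIdeal R)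
    -- a chain complex of finitely generated free modules concentrated in degrees `0 … d`
    (F : ChainComplex (ModuleCat.{0} R) ℕ)
    (hfree : ∀ j, Module.Free R (F.X j)) (hfg : ∀ j, Module.Finite R (F.X j))
    (hbounded : ∀ j, d < j → Subsingleton (F.X j))
    -- all homology modules have finite length
    (hfl : ∀ j, IsFiniteLength R (F.homology j)) :
    ∀ j, 1 ≤ j → Subsingleton (F.homology j) := by
  obtain ⟨s, hs⟩ := hreg
  obtain ⟨-, rs, hl, hm, hw⟩ := FreeComplexAux.reg_seq d R hdim s hs
  exact FreeComplexAux.main_of_reg d hd rs hl hm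
    (RingTheory.Sequence.IsRegular.of_isWeaklyRegular_of_mem_maximalIdeal R hm hw)
    F hfree hfg hbounded hfl
end
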